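/- Let B be a type with the discrete topology, let ℕ → B carry the product topology, let A : Set B be countable, equip ↥A with the discrete topology and ℕ → ℕ → ↥A appropriately, with ℕ → ↥A carrying the product topology, and let ι : (ℕ → ↥A) → (ℕ → B) be the map x ↦ (fun n => (x n : B)). If O ⊆ (ℕ → ↥A) is open in ℕ → ↥A, then there exists a family F : ℕ → Set (ℕ → B) of closed subsets of ℕ → B such that ι '' O = ⋃ n, F n. (An open set of A^ω becomes a Σ⁰₂ set, i.e., a countable union of closed sets, when the alphabet is expanded to B.) -/

import Mathlib

open Set Topology TopologicalSpace

/-- The class `Σ⁰₂` (or `F_σ`) of the Borel hierarchy. The closed sets are indexed by `ℕ`; finite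
unions are covered because some of them may be empty. -/
def IsFσ {X : Type*} [TopologicalSpace X] (s : Set X) : Prop :=
  ∃ F : ℕ → Set X, (∀ n, IsClosed (F n)) ∧ s = ⋃ n, F n

theorem isFσ_of_isOpen {X : Type*} [TopologicalSpace X] [PseudoMetrizableSpace X] {s : Set X}
    (hs : IsOpen s) : IsFσ s := by
  let := pseudoMetrizableSpacePseudoMetric X
  obtain ⟨F, hF, -, hFs, -⟩ := hs.exists_iUnion_isClosed
  exact ⟨F, hF, hFs.symm⟩

theorem IsFσ.image_of_isClosedMap {X Y : Type*} [TopologicalSpace X] [TopologicalSpace Y]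
    {f : X → Y} {s : Set X} (hs : IsFσ s) (hf : IsClosedMap f) : IsFσ (f '' s) := by
  obtain ⟨F, hF, rfl⟩ := hs
  exact ⟨fun n => f '' F n, fun n => hf _ (hF n), image_iUnion⟩

instance pseudoMetrizableSpace_pi_of_countable {ι : Type*} [Countable ι] {X : ι → Type*}
    [∀ i, TopologicalSpace (X i)] [∀ i, PseudoMetrizableSpace (X i)] :
    PseudoMetrizableSpace (∀ i, X i) := by
  let := fun i => pseudoMetrizableSpacePseudoMetric (X i)
  infer_instance

theorem isClosedEmbedding_pi_subtypeVal {ι : Type*} {B : ι → Type*} [∀ i, TopologicalSpace (B i)]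
    {A : ∀ i, Set (B i)} (hA : ∀ i, IsClosed (A i)) :
    IsClosedEmbedding (fun (x : ∀ i, A i) (i : ι) => (x i : B i)) :=
  .piMap fun i => (hA i).isClosedEmbedding_subtypeVal

theorem open_set_becomes_sigma02_general {ι : Type*} [Countable ι] {B : ι → Type*}
    [∀ i, TopologicalSpace (B i)] {A : ∀ i, Set (B i)} [∀ i, PseudoMetrizableSpace (A i)]
    (hA : ∀ i, IsClosed (A i)) {O : Set (∀ i, A i)} (hO : IsOpen O) :
    IsFσ ((fun (x : ∀ i, A i) (i : ι) => (x i : B i)) '' O) :=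
  (isFσ_of_isOpen hO).image_of_isClosedMap (isClosedEmbedding_pi_subtypeVal hA).isClosedMap

theorem open_set_becomes_sigma02
    (B : Type*) [TopologicalSpace B] [DiscreteTopology B] (A : Set B)
    (hA : A.Countable) (O : Set (ℕ → ↥A)) (hO : IsOpen O) :
    ∃ F : ℕ → Set (ℕ → B), (∀ n, IsClosed (F n)) ∧
      (fun (x : ℕ → ↥A) (n : ℕ) => (x n : B)) '' O = ⋃ n, F n :=
  open_set_becomes_sigma02_general (fun _ => isClosed_discrete A) hO
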